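/- Let C be a triangulated category, B a weakly negative set of objects of C, and 𝔻 the triangulated subcategory of C generated by B. Let n be an integer, X an object of C with Hom(X, Z) = 0 for all Z ∈ B_{≥1}, and Y an object of C with Hom(Z, Y) = 0 for all Z ∈ B_{≤ n−2}. Then any morphism e : X → Y in the Verdier quotient C/𝔻 can be presented as h ∘ q⁻¹ for some object Z of C, h ∈ C(Z, Y) and q ∈ C(Z, X) such that Cone(q) ∈ B_{[n,0]}. -/

import Mathlib

open CategoryTheory Limits Pretriangulated ZeroObject

universe v u v' u'

section TriangulatedPrelude

variable {C : Type u} [Category.{v} C] [HasZeroObject C] [HasShift C ℤ] [Preadditive C]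
  [∀ n : ℤ, (shiftFunctor C n).Additive] [Pretriangulated C]

/-- The objects of the smallest strict full triangulated subcategory of `C`
containing the set of objects `B`. -/
inductive genSub (B : Set C) : C → Prop
  | of (X : C) (hX : X ∈ B) : genSub B X
  | zero (X : C) (hX : IsZero X) : genSub B X
  | shift (X : C) (n : ℤ) (hX : genSub B X) : genSub B (X⟦n⟧)
  | ext₂ (T : Triangle C) (hT : T ∈ distTriang C) (h₁ : genSub B T.obj₁)
      (h₃ : genSub B T.obj₃) : genSub B T.obj₂

/-- The triangulated subcategory of `C` generated by `B`. -/
def genSubcat (B : Set C) : {P : ObjectProperty C // P.IsTriangulated} :=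
  ⟨genSub B,
    { exists_zero := ⟨0, isZero_zero _, genSub.zero _ (isZero_zero _)⟩
      isStableUnderShiftBy := fun n => ⟨fun X h => genSub.shift X n h⟩
      ext₂' := fun T hT h₁ h₃ =>
        ObjectProperty.le_isoClosure _ _ (genSub.ext₂ T hT h₁ h₃) }⟩

/-- The extension-closure of a class of objects `E`: the smallest class containing `E`
and `0` and such that for any distinguished triangle `X ⟶ Y ⟶ Z` with `X, Z` in the
class, `Y` is also in the class. -/
inductive extClosure (E : Set C) : C → Prop
  | of (X : C) (hX : X ∈ E) : extClosure E X
  | zero (X : C) (hX : IsZero X) : extClosure E X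
  | ext₂ (T : Triangle C) (hT : T ∈ distTriang C) (h₁ : extClosure E T.obj₁)
      (h₃ : extClosure E T.obj₃) : extClosure E T.obj₂

/-- `D_{[i,j]}`: the extension-closure of `∪_{i ≤ l ≤ j} D[l]`. -/
def shiftClosure (D : Set C) (i j : ℤ) : Set C :=
  extClosure {X | ∃ (Y : C) (l : ℤ), i ≤ l ∧ l ≤ j ∧ Y ∈ D ∧ X = Y⟦l⟧}

/-- `D_{≥ i} = ∪_{k ≥ i} D_{[i,k]}`. -/
def shiftClosureGE (D : Set C) (i : ℤ) : Set C := {X | ∃ k, i ≤ k ∧ X ∈ shiftClosure D i k}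

/-- `D_{≤ j} = ∪_{k ≤ j} D_{[k,j]}`. -/
def shiftClosureLE (D : Set C) (j : ℤ) : Set C := {X | ∃ k, k ≤ j ∧ X ∈ shiftClosure D k j}

/-- A set of objects `D` is weakly negative if `0 ∈ D` and `Hom(X, Y[i]) = 0`
for all `X, Y ∈ D` and all `i ≥ 2`. -/
def WeaklyNegative (D : Set C) : Prop :=
  (0 : C) ∈ D ∧ ∀ X ∈ D, ∀ Y ∈ D, ∀ i : ℤ, 2 ≤ i → ∀ f : X ⟶ (Y⟦i⟧), f = 0

end TriangulatedPrelude

section Helpers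

open Triangulated

variable {C : Type u} [Category.{v} C] [HasZeroObject C] [HasShift C ℤ] [Preadditive C]
  [∀ n : ℤ, (shiftFunctor C n).Additive] [Pretriangulated C]

lemma extClosure_of_iso (E : Set C) {X Y : C} (e : X ≅ Y) (h : extClosure E X) :
    extClosure E Y := by
  have hT : Triangle.mk e.hom (0 : Y ⟶ 0) 0 ∈ distTriang C :=
    (Triangle.distinguished_iff_of_isZero₃ _ (isZero_zero C)).2 (by change IsIso e.hom; infer_instance)
  exact extClosure.ext₂ _ hT h (extClosure.zero _ (isZero_zero C))

lemma extClosure_mono {E F : Set C} (h : ∀ X ∈ E, extClosure F X) {X : C}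
    (hX : extClosure E X) : extClosure F X := by
  induction hX with
  | of X hX => exact h X hX
  | zero X hX => exact extClosure.zero X hX
  | ext₂ T hT _ _ h₁ h₃ => exact extClosure.ext₂ T hT h₁ h₃

lemma extClosure_shift {E F : Set C} (m : ℤ) (h : ∀ X ∈ E, extClosure F (X⟦m⟧)) {X : C}
    (hX : extClosure E X) : extClosure F (X⟦m⟧) := by
  induction hX with
  | of X hX => exact h X hX
  | zero X hX => exact extClosure.zero _ (Functor.map_isZero (shiftFunctor C m) hX)
  | ext₂ T hT _ _ h₁ h₃ =>
    exact extClosure.ext₂ _ (Triangle.shift_distinguished T hT m) h₁ h₃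

lemma shiftClosure_mono (B : Set C) {i j i' j' : ℤ} (hi : i' ≤ i) (hj : j ≤ j') {X : C}
    (hX : X ∈ shiftClosure B i j) : X ∈ shiftClosure B i' j' := by
  refine extClosure_mono ?_ hX
  rintro X ⟨Y, l, h1, h2, h3, h4⟩
  exact extClosure.of _ ⟨Y, l, by lia, by lia, h3, h4⟩

lemma shiftClosure_shift (B : Set C) {i j i' j' : ℤ} (m : ℤ) (hi : i' = i + m)
    (hj : j' = j + m) {X : C}
    (hX : X ∈ shiftClosure B i j) : X⟦m⟧ ∈ shiftClosure B i' j' := by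
  refine extClosure_shift m ?_ hX
  rintro X ⟨Y, l, h1, h2, h3, rfl⟩
  exact extClosure_of_iso _ ((shiftFunctorAdd C l m).app Y)
    (extClosure.of _ ⟨Y, l + m, by lia, by lia, h3, rfl⟩)

lemma extClosure_hom_zero {E F : Set C} (h : ∀ X ∈ E, ∀ Y ∈ F, ∀ f : X ⟶ Y, f = 0) {X Y : C}
    (hX : extClosure E X) (hY : extClosure F Y) (f : X ⟶ Y) : f = 0 := by
  have key : ∀ X ∈ E, ∀ f : X ⟶ Y, f = 0 := by
    clear hX f
    intro X hX
    induction hY with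
    | of Y hY => exact h X hX Y hY
    | zero Y hY => exact fun f => hY.eq_of_tgt _ _
    | ext₂ T hT _ _ h₁ h₃ =>
      intro f
      obtain ⟨g, rfl⟩ := Triangle.coyoneda_exact₂ T hT f (h₃ _)
      rw [h₁ g, zero_comp]
  induction hX with
  | of X hX => exact key X hX f
  | zero X hX => exact hX.eq_of_src _ _
  | ext₂ T hT _ _ h₁ h₃ =>
    obtain ⟨g, rfl⟩ := Triangle.yoneda_exact₂ T hT f (h₁ _)
    rw [h₃ g, comp_zero]

lemma shiftClosure_hom_zero (B : Set C) (hB : WeaklyNegative B) {i j i' j' : ℤ}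
    (hij : j + 2 ≤ i') {X Y : C} (hX : X ∈ shiftClosure B i j) (hY : Y ∈ shiftClosure B i' j')
    (f : X ⟶ Y) : f = 0 := by
  refine extClosure_hom_zero ?_ hX hY f
  rintro _ ⟨X, l, h1, h2, h3, rfl⟩ _ ⟨Y, l', h1', h2', h3', rfl⟩ f
  let a := (shiftFunctorCompIsoId C l (-l) (by lia)).app X
  let b := (shiftFunctorAdd' C l' (-l) (l' - l) (by lia)).app Y
  have hz := hB.2 X h3 Y h3' (l' - l) (by lia) (a.inv ≫ f⟦-l⟧' ≫ b.inv)
  apply (shiftFunctor C (-l)).map_injective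
  rw [Functor.map_zero]
  have h2 : f⟦-l⟧' = a.hom ≫ (a.inv ≫ f⟦-l⟧' ≫ b.inv) ≫ b.hom := by
    simp
  rw [h2, hz]
  simp

lemma genSub_bounded (B : Set C) {X : C} (hX : genSub B X) :
    ∃ i j : ℤ, X ∈ shiftClosure B i j := by
  induction hX with
  | of X hX =>
    exact ⟨0, 0, extClosure_of_iso _ ((shiftFunctorZero C ℤ).app X)
      (extClosure.of _ ⟨X, 0, le_rfl, le_rfl, hX, rfl⟩)⟩
  | zero X hX => exact ⟨0, 0, extClosure.zero X hX⟩
  | shift X m _ ih =>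
    obtain ⟨i, j, h⟩ := ih
    exact ⟨i + m, j + m, shiftClosure_shift B m rfl rfl h⟩
  | ext₂ T hT _ _ h₁ h₃ =>
    obtain ⟨i, j, h⟩ := h₁
    obtain ⟨i', j', h'⟩ := h₃
    exact ⟨min i i', max j j', extClosure.ext₂ T hT
      (shiftClosure_mono B (min_le_left _ _) (le_max_left _ _) h)
      (shiftClosure_mono B (min_le_right _ _) (le_max_right _ _) h')⟩

lemma shiftClosure_genSub (B : Set C) {i j : ℤ} {X : C} (hX : X ∈ shiftClosure B i j) :
    genSub B X := by
  change extClosure _ X at hX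
  induction hX with
  | of X hX =>
    obtain ⟨Y, l, _, _, h, rfl⟩ := hX
    exact genSub.shift _ _ (genSub.of _ h)
  | zero X hX => exact genSub.zero X hX
  | ext₂ T hT _ _ h₁ h₃ => exact genSub.ext₂ T hT h₁ h₃

/-- The class `B_{[i,j]}` as an object property. -/
def scProp (B : Set C) (i j : ℤ) : ObjectProperty C := fun X => X ∈ shiftClosure B i j

instance (B : Set C) (i j : ℤ) : (scProp B i j).ContainsZero :=
  ⟨0, isZero_zero C, extClosure.zero _ (isZero_zero C)⟩

lemma scProp_ext (B : Set C) (i j : ℤ) :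
    ObjectProperty.extensionProduct (scProp B i j) (scProp B i j) ≤ scProp B i j := by
  rintro X ⟨_, _, _, _, _, hT, h₁, h₃⟩
  exact extClosure.ext₂ _ hT h₁ h₃

open ObjectProperty in
lemma scProp_swap (B : Set C) (hB : WeaklyNegative B) (i j k : ℤ) :
    extensionProduct (scProp B (k + 1) j) (scProp B i k) ≤
      extensionProduct (scProp B i k) (scProp B (k + 1) j) := by
  rintro X ⟨Y, Z, f, g, h, hT, hY, hZ⟩
  have h0 : h = 0 := shiftClosure_hom_zero B hB (by lia) hZ
    (shiftClosure_shift B (i' := k + 1 + 1) (j' := j + 1) 1 rfl rfl hY) h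
  obtain ⟨e, -, -⟩ := exists_iso_binaryBiproduct_of_distTriang _ hT h0
  refine ObjectProperty.prop_of_iso _ (biprod.braiding Z Y ≪≫ e.symm) ?_
  exact ⟨_, _, _, _, _, binaryBiproductTriangle_distinguished Z Y, hZ, hY⟩

open ObjectProperty in
lemma shiftClosure_split [IsTriangulated C] (B : Set C) (hB : WeaklyNegative B) (i j k : ℤ)
    {X : C} (hX : X ∈ shiftClosure B i j) :
    extensionProduct (scProp B i k) (scProp B (k + 1) j) X := by
  change extClosure _ X at hX
  induction hX with
  | of X hX =>
    obtain ⟨Y, l, h1, h2, h3, rfl⟩ := hX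
    by_cases hl : l ≤ k
    · exact le_extensionProduct_left _ _ (extClosure.of _ ⟨Y, l, h1, hl, h3, rfl⟩)
    · exact le_extensionProduct_right _ _ (extClosure.of _ ⟨Y, l, by lia, h2, h3, rfl⟩)
  | zero X hX => exact le_extensionProduct_left _ _ (extClosure.zero _ hX)
  | ext₂ T hT _ _ h₁ h₃ =>
    have h : extensionProduct (extensionProduct (scProp B i k) (scProp B (k + 1) j))
        (extensionProduct (scProp B i k) (scProp B (k + 1) j)) T.obj₂ :=
      ⟨_, _, _, _, _, hT, h₁, h₃⟩
    rw [extensionProduct_assoc, ← extensionProduct_assoc (scProp B (k + 1) j)] at h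
    have h := monotone_extensionProduct_right _
      (monotone_extensionProduct_left _ (scProp_swap B hB i j k)) _ h
    rw [extensionProduct_assoc, ← extensionProduct_assoc] at h
    exact monotone_extensionProduct_left _ (scProp_ext _ _ _) _
      (monotone_extensionProduct_right _ (scProp_ext _ _ _) _ h)

end Helpers

/-- Proposition: presentation of morphisms in the Verdier quotient `C/𝔻` as roofs
`h ∘ q⁻¹` with `Cone(q) ∈ B_{[n,0]}`. -/
theorem statement5 {C : Type u} [Category.{v} C] [HasZeroObject C] [HasShift C ℤ]
    [Preadditive C] [∀ n : ℤ, (shiftFunctor C n).Additive] [Pretriangulated C]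
    [IsTriangulated C] (B : Set C) (hB : WeaklyNegative B) (n : ℤ) (X Y : C)
    (hX : ∀ Z ∈ shiftClosureGE B 1, ∀ f : X ⟶ Z, f = 0)
    (hY : ∀ Z ∈ shiftClosureLE B (n - 2), ∀ f : Z ⟶ Y, f = 0)
    (e : (genSubcat B).1.trW.Q.obj X ⟶ (genSubcat B).1.trW.Q.obj Y) :
    ∃ (Z : C) (h : Z ⟶ Y) (q : Z ⟶ X),
      (∃ (W : C) (a : X ⟶ W) (b : W ⟶ Z⟦(1 : ℤ)⟧),
        (Triangle.mk q a b ∈ distTriang C) ∧ W ∈ shiftClosure B n 0) ∧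
      IsIso ((genSubcat B).1.trW.Q.map q) ∧
      (genSubcat B).1.trW.Q.map q ≫ e = (genSubcat B).1.trW.Q.map h := by
  have := (genSubcat B).2
  obtain ⟨φ, hφ⟩ := Localization.exists_rightFraction (genSubcat B).1.trW.Q (genSubcat B).1.trW e
  have hse := congrArg (fun z => (genSubcat B).1.trW.Q.map φ.s ≫ z) hφ
  simp only [MorphismProperty.RightFraction.map_s_comp_map] at hse
  obtain ⟨W, a, b, hT, hW⟩ := φ.hs
  let f := φ.f
  let s := φ.s
  let Z := φ.X'
  -- first truncation
  obtain ⟨i, j, hW⟩ := genSub_bounded B hW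
  have hW1 : W ∈ shiftClosure B (min i 0) (max j 1) :=
    shiftClosure_mono B (min_le_left _ _) (le_max_left _ _) hW
  obtain ⟨W₀, W₁, p, r, d, hT₁, hW₀, hW₁⟩ := shiftClosure_split B hB _ _ 0 hW1
  have har : a ≫ r = 0 := hX W₁ ⟨max j 1, le_max_right _ _, hW₁⟩ _
  obtain ⟨a', ha'⟩ := Triangle.coyoneda_exact₂ _ hT₁ a har
  change X ⟶ W₀ at a'
  change a = a' ≫ p at ha'
  obtain ⟨Z', s', c', hT'⟩ := distinguished_cocone_triangle₁ a'
  obtain ⟨t, ht, -⟩ := complete_distinguished_triangle_morphism₁ _ _ hT' hT (𝟙 X) p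
    (by
      change a' ≫ p = 𝟙 X ≫ a
      rw [Category.id_comp, ha'])
  change Z' ⟶ Z at t
  change s' ≫ 𝟙 X = t ≫ s at ht
  rw [Category.comp_id] at ht
  -- second truncation
  obtain ⟨A, W₂, p₂, r₂, d₂, hT₂, hA, hW₂⟩ := shiftClosure_split B hB _ _ (n - 1) hW₀
  obtain ⟨Z₂, q, c₂, hT₃⟩ := distinguished_cocone_triangle₁ (a' ≫ r₂)
  let o := Triangulated.someOctahedron' rfl hT' hT₂ hT₃
  have hW₂' : W₂ ∈ shiftClosure B n 0 := shiftClosure_mono B (by lia) le_rfl hW₂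
  have hAs : A⟦(-1 : ℤ)⟧ ∈ shiftClosureLE B (n - 2) :=
    ⟨min (min i 0 + (-1)) (n - 2), min_le_right _ _,
      shiftClosure_mono B (min_le_left _ _) le_rfl
        (shiftClosure_shift B (-1) rfl (by lia) hA)⟩
  obtain ⟨h, hh⟩ := Triangle.yoneda_exact₂ _ (inv_rot_of_distTriang _ o.mem) (t ≫ f)
    (hY _ hAs _)
  change Z₂ ⟶ Y at h
  change t ≫ f = o.m₁ ≫ h at hh
  have hq : (genSubcat B).1.trW q := ⟨_, _, _, hT₃, shiftClosure_genSub B hW₂'⟩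
  have hs1 : (genSubcat B).1.trW s' := ⟨_, _, _, hT', shiftClosure_genSub B hW₀⟩
  have iq := Localization.inverts (genSubcat B).1.trW.Q (genSubcat B).1.trW q hq
  have is1 := Localization.inverts (genSubcat B).1.trW.Q (genSubcat B).1.trW s' hs1
  refine ⟨Z₂, h, q, ⟨W₂, _, _, hT₃, hW₂'⟩, iq, ?_⟩
  have hm : (genSubcat B).1.trW.Q.map o.m₁ ≫ (genSubcat B).1.trW.Q.map q =
      (genSubcat B).1.trW.Q.map s' := by
    rw [← Functor.map_comp, o.comm₁]
  have im : IsIso ((genSubcat B).1.trW.Q.map o.m₁) := by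
    have : IsIso ((genSubcat B).1.trW.Q.map o.m₁ ≫ (genSubcat B).1.trW.Q.map q) := by
      rw [hm]; exact is1
    exact IsIso.of_isIso_comp_right _ ((genSubcat B).1.trW.Q.map q)
  rw [← cancel_epi ((genSubcat B).1.trW.Q.map o.m₁), ← Category.assoc, hm, ← Functor.map_comp,
    ← hh, Functor.map_comp, show f = φ.f from rfl, ← hse, ← Category.assoc, ← Functor.map_comp, ht]
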